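/- (Proposition on symmetry, postulate FD4center.) Call a cloud (y¹, …, yⁿ) in ℝ^d centrally symmetric about c ∈ ℝ^d if there is a permutation σ of {1, …, n} with y^{σ(i)} = 2c − y^i for all i, and similarly for clouds in E. Suppose D^d is maximal at centers of central symmetry: for every cloud Y in ℝ^d centrally symmetric about c and every v ∈ ℝ^d, D^d(c | Y) ≥ D^d(v | Y). If the data cloud X = (x¹, …, xⁿ) in E is centrally symmetric about some z^c ∈ E and there exists z* ∈ E with D(z* | X) = 1, then D(z^c | X) = 1; in particular the Φ-depth attains its maximum at z^c. -/

import Mathlib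

/-- The cloud `Y` is centrally symmetric about `c`: reflection through `c` permutes its points,
counted with multiplicity. The scalar ring `R` only serves to write the reflection as
`y ↦ 2 • c - y`. -/
def IsCentrallySymmetric (R : Type*) {ι V : Type*} [Semiring R] [AddCommGroup V] [Module R V]
    (Y : ι → V) (c : V) : Prop :=
  ∃ σ : Equiv.Perm ι, ∀ i, Y (σ i) = (2 : R) • c - Y i

/-- The symmetry postulate for a depth `D` of points relative to clouds: on every centrally
symmetric cloud, `D` is maximal at the center. -/
def IsMaximalAtCenters (R : Type*) {ι V L : Type*} [Semiring R] [AddCommGroup V] [Module R V]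
    [LE L] (D : V → (ι → V) → L) : Prop :=
  ∀ (Y : ι → V) (c : V), IsCentrallySymmetric R Y c → ∀ v, D v Y ≤ D c Y

/-- The `Φ`-depth of a point relative to a cloud: the infimum over `φ ∈ Φ` of the depth `D` after
projection by `φ`. In a conditionally complete lattice such as `ℝ` this is a genuine infimum only
if `Φ` is nonempty and the projected depths are bounded below. -/
def phiDepth {ι V W F L : Type*} [FunLike F V W] [InfSet L] (D : W → (ι → W) → L) (Φ : Set F)
    (z : V) (X : ι → V) : L :=
  sInf {v | ∃ φ ∈ Φ, v = D (φ z) (fun i => φ (X i))}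

theorem IsCentrallySymmetric.map {R ι V W F : Type*} [Semiring R] [AddCommGroup V] [Module R V]
    [AddCommGroup W] [Module R W] [FunLike F V W] [LinearMapClass F R V W] {X : ι → V} {c : V}
    (hX : IsCentrallySymmetric R X c) (φ : F) :
    IsCentrallySymmetric R (fun i => φ (X i)) (φ c) := by
  obtain ⟨σ, hσ⟩ := hX
  exact ⟨σ, fun i => by simp only [hσ, map_sub, map_smul]⟩

section Bounds

variable {ι V W F L : Type*} [FunLike F V W] [ConditionallyCompleteLattice L]
  {D : W → (ι → W) → L} {Φ : Set F} {z : V} {X : ι → V} {a b : L}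

theorem phiDepth_le (hb : ∀ y Y, b ≤ D y Y) {φ : F} (hφ : φ ∈ Φ) :
    phiDepth D Φ z X ≤ D (φ z) (fun i => φ (X i)) := by
  refine csInf_le ⟨b, ?_⟩ ⟨φ, hφ, rfl⟩
  rintro _ ⟨ψ, -, rfl⟩
  exact hb _ _

theorem le_phiDepth (hΦ : Φ.Nonempty) (ha : ∀ φ ∈ Φ, a ≤ D (φ z) (fun i => φ (X i))) :
    a ≤ phiDepth D Φ z X := by
  obtain ⟨φ₀, hφ₀⟩ := hΦ
  refine le_csInf ⟨_, φ₀, hφ₀, rfl⟩ ?_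
  rintro _ ⟨φ, hφ, rfl⟩
  exact ha φ hφ

theorem phiDepth_le_of_forall_mem_Icc (hD : ∀ y Y, D y Y ∈ Set.Icc a b) (hΦ : Φ.Nonempty) :
    phiDepth D Φ z X ≤ b :=
  let ⟨_, hφ⟩ := hΦ
  (phiDepth_le (fun y Y => (hD y Y).1) hφ).trans (hD _ _).2

end Bounds

theorem phi_depth_FD4center_general {R ι V W F L : Type*} [Semiring R] [AddCommGroup V]
    [Module R V] [AddCommGroup W] [Module R W] [FunLike F V W] [LinearMapClass F R V W]
    [ConditionallyCompleteLattice L] {D : W → (ι → W) → L} {Φ : Set F} {b : L}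
    (hb : ∀ y Y, b ≤ D y Y) (hΦ : Φ.Nonempty) (hD : IsMaximalAtCenters R D) :
    IsMaximalAtCenters R (phiDepth D Φ : V → (ι → V) → L) := fun X c hX z =>
  le_phiDepth hΦ fun φ hφ =>
    calc phiDepth D Φ z X
      _ ≤ D (φ z) (fun i => φ (X i)) := phiDepth_le hb hφ
      _ ≤ D (φ c) (fun i => φ (X i)) := hD _ _ (hX.map φ) _

/-- FD4center: if the d-variate depth is maximal at centers of central symmetry,
the data cloud is centrally symmetric about z^c, and some point has Φ-depth 1,
then the Φ-depth is maximal (equal to 1) at z^c. -/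
theorem phi_depth_FD4center
    {E : Type*} [NormedAddCommGroup E] [NormedSpace ℝ E]
    {n d : ℕ} (hn : 0 < n) (hd : 0 < d)
    (Dd : (Fin d → ℝ) → (Fin n → (Fin d → ℝ)) → ℝ)
    (hDd01 : ∀ y Y, Dd y Y ∈ Set.Icc (0 : ℝ) 1)
    (Φ : Set (E →L[ℝ] (Fin d → ℝ))) (hΦ : Φ.Nonempty)
    (D : E → (Fin n → E) → ℝ)
    (hD : ∀ z X, D z X = sInf {v : ℝ | ∃ φ ∈ Φ, v = Dd (φ z) (fun i => φ (X i))})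
    (hsym : ∀ (Y : Fin n → (Fin d → ℝ)) (c : Fin d → ℝ),
      (∃ σ : Equiv.Perm (Fin n), ∀ i, Y (σ i) = (2 : ℝ) • c - Y i) →
      ∀ v, Dd v Y ≤ Dd c Y)
    (X : Fin n → E) (zc : E)
    (hX : ∃ σ : Equiv.Perm (Fin n), ∀ i, X (σ i) = (2 : ℝ) • zc - X i)
    (hex : ∃ zstar : E, D zstar X = 1) :
    D zc X = 1 := by
  obtain rfl : D = phiDepth Dd Φ := funext₂ hD
  obtain ⟨zstar, hzstar⟩ := hex
  have hmax : phiDepth Dd Φ zstar X ≤ phiDepth Dd Φ zc X :=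
    phi_depth_FD4center_general (fun y Y => (hDd01 y Y).1) hΦ hsym X zc hX zstar
  exact (phiDepth_le_of_forall_mem_Icc hDd01 hΦ).antisymm (hzstar ▸ hmax)
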